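/- Let T be a nonnegative tensor of order m ≥ 2 and dimension n ≥ 2. Then there exists a partition {I_1,…,I_k} of {1,…,n} into pairwise disjoint nonempty sets whose union is {1,…,n} such that every induced tensor T_{I_j} is weakly irreducible and ρ(T) = max_{j=1,…,k} ρ(T_{I_j}); in particular, if T is weakly reducible, then ρ(T) = ρ(T_{I_p}) for some block I_p of such a partition. -/

import Mathlib

open Finset

/-- `(T x^{m-1})_i` for an order-`(k+1)` tensor encoded by its first index
and the `k` trailing indices (so for an order-`m` tensor, `k = m - 1`). -/
def tapp {ι : Type*} [Fintype ι] {k : ℕ} (T : ι → (Fin k → ι) → ℝ) (x : ι → ℝ) (i : ι) : ℝ :=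
  ∑ β : Fin k → ι, T i β * ∏ l, x (β l)

/-- All entries of the tensor are nonnegative. -/
def TNonneg {ι : Type*} {k : ℕ} (T : ι → (Fin k → ι) → ℝ) : Prop :=
  ∀ i β, 0 ≤ T i β

/-- `T` is strictly nonnegative: nonnegative, and `T x^{m-1} > 0` whenever `x > 0`. -/
def TStrictlyNonneg {ι : Type*} [Fintype ι] {k : ℕ} (T : ι → (Fin k → ι) → ℝ) : Prop :=
  TNonneg T ∧ ∀ x : ι → ℝ, (∀ i, 0 < x i) → ∀ i, 0 < tapp T x i

/-- Representation matrix `G(T)`: `G(T)_{ij}` is the sum of all `T_{i i₂…i_m}` with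
`j ∈ {i₂,…,i_m}`. -/
def repMat {ι : Type*} [Fintype ι] [DecidableEq ι] {k : ℕ}
    (T : ι → (Fin k → ι) → ℝ) : Matrix ι ι ℝ :=
  fun i j => ∑ β : Fin k → ι, if ∃ l, β l = j then T i β else 0

/-- Majorization matrix `M(T)`: `M(T)_{ij} = T_{i j j … j}`. -/
def majMat {ι : Type*} {k : ℕ} (T : ι → (Fin k → ι) → ℝ) : Matrix ι ι ℝ :=
  fun i j => T i (fun _ => j)

/-- A square matrix is reducible if some nonempty proper index subset `I` satisfies
`A i j = 0` for all `i ∈ I`, `j ∉ I`. -/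
def MatReducible {ι : Type*} [Fintype ι] (A : Matrix ι ι ℝ) : Prop :=
  ∃ I : Finset ι, I.Nonempty ∧ I ≠ Finset.univ ∧ ∀ i ∈ I, ∀ j ∉ I, A i j = 0

def MatIrreducible {ι : Type*} [Fintype ι] (A : Matrix ι ι ℝ) : Prop :=
  ¬ MatReducible A

/-- A square nonnegative matrix is primitive if some positive power is entrywise positive. -/
def MatPrimitive {ι : Type*} [Fintype ι] [DecidableEq ι] (A : Matrix ι ι ℝ) : Prop :=
  ∃ p : ℕ, 0 < p ∧ ∀ i j, 0 < (A ^ p) i j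

/-- `lam ∈ ℂ` is an eigenvalue of `T`:
`(T x^{m-1})_i = lam * x_i^{m-1}` for some nonzero `x ∈ ℂⁿ`. -/
def TIsEig {ι : Type*} [Fintype ι] {k : ℕ} (T : ι → (Fin k → ι) → ℝ) (lam : ℂ) : Prop :=
  ∃ x : ι → ℂ, x ≠ 0 ∧
    ∀ i, (∑ β : Fin k → ι, (T i β : ℂ) * ∏ l, x (β l)) = lam * x i ^ k

/-- Spectral radius: the supremum of moduli of eigenvalues. -/
noncomputable def specRad {ι : Type*} [Fintype ι] {k : ℕ}
    (T : ι → (Fin k → ι) → ℝ) : ℝ :=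
  sSup {r : ℝ | ∃ lam : ℂ, TIsEig T lam ∧ r = ‖lam‖}

/-- Induced tensor `T_I` on a subset `I` of the index set. -/
def inducedT {ι : Type*} {k : ℕ} (T : ι → (Fin k → ι) → ℝ) (I : Finset ι) :
    {i // i ∈ I} → (Fin k → {i // i ∈ I}) → ℝ :=
  fun i β => T i.val (fun l => (β l).val)

/-- The identity tensor: `E_{i₁…i_m} = 1` if all indices coincide, `0` otherwise. -/
def idT (ι : Type*) [DecidableEq ι] (k : ℕ) : ι → (Fin k → ι) → ℝ :=
  fun i β => if ∀ l, β l = i then 1 else 0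

/-- A tensor is reducible if some nonempty proper index subset `I` satisfies
`T_{i₁ i₂ … i_m} = 0` for all `i₁ ∈ I` and `i₂, …, i_m ∉ I`. -/
def TReducible {ι : Type*} [Fintype ι] {k : ℕ} (T : ι → (Fin k → ι) → ℝ) : Prop :=
  ∃ I : Finset ι, I.Nonempty ∧ I ≠ Finset.univ ∧
    ∀ i ∈ I, ∀ β : Fin k → ι, (∀ l, β l ∉ I) → T i β = 0

/-- The map `F_T(x)_i = ((T x^{m-1})_i)^{1/(m-1)}` (here `k = m - 1`). -/
noncomputable def FT {ι : Type*} [Fintype ι] {k : ℕ}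
    (T : ι → (Fin k → ι) → ℝ) (x : ι → ℝ) : ι → ℝ :=
  fun i => (tapp T x i) ^ ((k : ℝ)⁻¹)

/-- A tensor is primitive if some iterate of `F_T` is entrywise positive on every
nonzero nonnegative vector. -/
def TPrimitive {ι : Type*} [Fintype ι] {k : ℕ} (T : ι → (Fin k → ι) → ℝ) : Prop :=
  ∃ p : ℕ, 0 < p ∧ ∀ x : ι → ℝ, (∀ i, 0 ≤ x i) → x ≠ 0 → ∀ i, 0 < (FT T)^[p] x i

/-- `T` is weakly positive: all off-diagonal entries of `M(T)` are positive. -/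
def TWeaklyPositive {ι : Type*} {k : ℕ} (T : ι → (Fin k → ι) → ℝ) : Prop :=
  ∀ i j, i ≠ j → 0 < T i (fun _ => j)

/-- `T` is essentially positive: `T x^{m-1} > 0` for every nonzero `x ≥ 0`. -/
def TEssentiallyPositive {ι : Type*} [Fintype ι] {k : ℕ} (T : ι → (Fin k → ι) → ℝ) : Prop :=
  ∀ x : ι → ℝ, (∀ i, 0 ≤ x i) → x ≠ 0 → ∀ i, 0 < tapp T x i

/-- Hilbert's projective metric between two positive vectors:
`d(u,v) = log (max_i v_i/u_i) - log (min_i v_i/u_i)`. -/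
noncomputable def hilbertD {n : ℕ} (hn : 0 < n) (u v : Fin n → ℝ) : ℝ :=
  Real.log ((Finset.univ : Finset (Fin n)).sup' ⟨⟨0, hn⟩, Finset.mem_univ _⟩
      (fun i => v i / u i)) -
  Real.log ((Finset.univ : Finset (Fin n)).inf' ⟨⟨0, hn⟩, Finset.mem_univ _⟩
      (fun i => v i / u i))

/-!
Write `x^[m-1]` for the entrywise power. The modulus `x` of an eigenvector of `T` with eigenvalue
`λ` satisfies `|λ| x^[m-1] ≤ T x^{m-1}`, and conversely every `r ≥ 0` with
`r x^[m-1] ≤ T x^{m-1}` for some nonzero `x ≥ 0` is at most `ρ(T)`: for an entrywise positive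
tensor the largest such `r` is an eigenvalue, because replacing `x` by `F_T(x)` makes all the
inequalities strict unless `x` is already an eigenvector, and the nonnegative case follows by
perturbation and compactness. Extending vectors by zero thus gives `ρ(T_I) ≤ ρ(T)`.

For the blocks, call `A ⊆ S` closed in `S` if no nonzero entry of `T_S` leads out of `A`. A minimal
nonempty closed set `A` carries a weakly irreducible tensor, and each eigenvector of `T_S` either
restricts to an eigenvector of `T_A` or vanishes on `A` and restricts to one of `T_{S \ A}`.
Splitting off such sets one after the other, every eigenvalue of `T` becomes one of some block.
-/

section Tapp

variable {ι : Type*} [Fintype ι] {k : ℕ} {T T' : ι → (Fin k → ι) → ℝ} {x : ι → ℝ}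

lemma tapp_nonneg (hT : TNonneg T) (hx : 0 ≤ x) (i : ι) : 0 ≤ tapp T x i :=
  sum_nonneg fun β _ => mul_nonneg (hT i β) (prod_nonneg fun _ _ => hx _)

lemma tapp_mono_tensor (hTT' : T ≤ T') (hx : 0 ≤ x) (i : ι) : tapp T x i ≤ tapp T' x i :=
  sum_le_sum fun β _ => mul_le_mul_of_nonneg_right (hTT' i β) (prod_nonneg fun _ _ => hx _)

lemma tapp_smul (T : ι → (Fin k → ι) → ℝ) (c : ℝ) (x : ι → ℝ) (i : ι) :
    tapp T (c • x) i = c ^ k * tapp T x i := by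
  simp only [tapp, Pi.smul_apply, smul_eq_mul, prod_mul_distrib, prod_const, card_univ,
    Fintype.card_fin, mul_sum, mul_left_comm]

lemma continuous_tapp (T : ι → (Fin k → ι) → ℝ) (i : ι) : Continuous fun x => tapp T x i := by
  unfold tapp
  fun_prop

lemma tapp_le_sum_mul_pow (hT : TNonneg T) (hx : 0 ≤ x) {M : ℝ} (hM : ∀ i, x i ≤ M) (i : ι) :
    tapp T x i ≤ (∑ β, T i β) * M ^ k := by
  rw [tapp, sum_mul]
  refine sum_le_sum fun β _ => mul_le_mul_of_nonneg_left ?_ (hT i β)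
  simpa using prod_le_prod (s := univ) (fun l _ => hx (β l)) (fun l _ => hM (β l))

lemma FT_nonneg (hT : TNonneg T) (hx : 0 ≤ x) : 0 ≤ FT T x :=
  fun i => Real.rpow_nonneg (tapp_nonneg hT hx i) _

lemma FT_pow (hk : k ≠ 0) (hT : TNonneg T) (hx : 0 ≤ x) (i : ι) : FT T x i ^ k = tapp T x i :=
  Real.rpow_inv_natCast_pow (tapp_nonneg hT hx i) hk

end Tapp

/-- `r x^[m-1] ≤ T x^{m-1}` for the nonzero nonnegative vector `x`: the feasible pairs of the
Collatz–Wielandt maximization problem. In the product order, `0 < x` means `0 ≤ x` and `x ≠ 0`, not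
entrywise positivity. -/
def IsSubEigenpair {ι : Type*} [Fintype ι] {k : ℕ} (T : ι → (Fin k → ι) → ℝ) (r : ℝ)
    (x : ι → ℝ) : Prop :=
  0 < x ∧ ∀ i, r * x i ^ k ≤ tapp T x i

/-- `T z^{m-1} = s z^[m-1]` for the nonnegative vector `z`, normalized so that these vectors range
over a compact set. -/
def IsNonnegEigenpair {ι : Type*} [Fintype ι] {k : ℕ} (T : ι → (Fin k → ι) → ℝ) (s : ℝ)
    (z : ι → ℝ) : Prop :=
  z ∈ stdSimplex ℝ ι ∧ ∀ i, tapp T z i = s * z i ^ k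

section CollatzWielandt

variable {ι : Type*} [Fintype ι] {k : ℕ} {T T' : ι → (Fin k → ι) → ℝ} {r s : ℝ} {x z : ι → ℝ}

lemma pos_of_mem_stdSimplex (hz : z ∈ stdSimplex ℝ ι) : 0 < z := by
  refine lt_of_le_of_ne hz.1 ?_
  rintro rfl
  simpa using hz.2

lemma inv_sum_smul_mem_stdSimplex (hx : 0 < x) : (∑ i, x i)⁻¹ • x ∈ stdSimplex ℝ ι := by
  have hsum : 0 < ∑ i, x i := Fintype.sum_pos hx
  refine ⟨fun i => mul_nonneg (inv_nonneg.mpr hsum.le) (hx.le i), ?_⟩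
  simp only [Pi.smul_apply, smul_eq_mul, ← mul_sum, inv_mul_cancel₀ hsum.ne']

namespace IsSubEigenpair

lemma le_sum (hT : TNonneg T) (h : IsSubEigenpair T r x) : r ≤ ∑ i, ∑ β, T i β := by
  obtain ⟨j, hj⟩ := (Pi.lt_def.mp h.1).2
  obtain ⟨i, -, hi⟩ := exists_max_image univ x ⟨j, mem_univ j⟩
  have hmax : ∀ a, x a ≤ x i := fun a => hi a (mem_univ a)
  have hrow : r ≤ ∑ β, T i β := le_of_mul_le_mul_right
    ((h.2 i).trans (tapp_le_sum_mul_pow hT h.1.le hmax i)) (pow_pos (hj.trans_le (hmax j)) k)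
  exact hrow.trans (single_le_sum (f := fun i => ∑ β, T i β)
    (fun a _ => sum_nonneg fun β _ => hT a β) (mem_univ i))

lemma mono_tensor (hTT' : T ≤ T') (h : IsSubEigenpair T r x) : IsSubEigenpair T' r x :=
  ⟨h.1, fun i => (h.2 i).trans (tapp_mono_tensor hTT' h.1.le i)⟩

lemma normalize (h : IsSubEigenpair T r x) : IsSubEigenpair T r ((∑ i, x i)⁻¹ • x) := by
  refine ⟨pos_of_mem_stdSimplex (inv_sum_smul_mem_stdSimplex h.1), fun i => ?_⟩
  have hsum : 0 ≤ ∑ i, x i := sum_nonneg fun i _ => h.1.le i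
  rw [tapp_smul, Pi.smul_apply, smul_eq_mul, mul_pow, mul_left_comm]
  exact mul_le_mul_of_nonneg_left (h.2 i) (pow_nonneg (inv_nonneg.mpr hsum) k)

lemma mul_prod_le_prod_FT (hk : k ≠ 0) (hT : TNonneg T) (hs : 0 ≤ s) (h : IsSubEigenpair T s z)
    (β : Fin k → ι) : s * ∏ l, z (β l) ≤ ∏ l, FT T z (β l) := by
  have hz : 0 ≤ z := h.1.le
  refine le_of_pow_le_pow_left₀ hk (prod_nonneg fun _ _ => FT_nonneg hT hz _) ?_
  calc (s * ∏ l, z (β l)) ^ k = ∏ l, s * z (β l) ^ k := by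
        simp only [mul_pow, prod_mul_distrib, prod_pow, prod_const, card_univ, Fintype.card_fin]
    _ ≤ ∏ l, tapp T z (β l) :=
        prod_le_prod (fun _ _ => mul_nonneg hs (pow_nonneg (hz _) k)) fun _ _ => h.2 _
    _ = (∏ l, FT T z (β l)) ^ k := by simp only [← prod_pow, FT_pow hk hT hz]

lemma mul_FT_pow_lt_tapp_FT (hk : k ≠ 0) (hT : ∀ i β, 0 < T i β) (hs : 0 ≤ s)
    (h : IsSubEigenpair T s z) {j : ι} (hj : tapp T z j ≠ s * z j ^ k) (i : ι) :
    s * FT T z i ^ k < tapp T (FT T z) i := by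
  have hT' : TNonneg T := fun i β => (hT i β).le
  rw [FT_pow hk hT' h.1.le, tapp, tapp, mul_sum]
  refine sum_lt_sum (fun β _ => ?_) ⟨fun _ => j, mem_univ _, ?_⟩ <;> rw [mul_left_comm]
  · exact mul_le_mul_of_nonneg_left (h.mul_prod_le_prod_FT hk hT' hs β) (hT' i β)
  · refine mul_lt_mul_of_pos_left ?_ (hT i _)
    simpa only [prod_const, card_univ, Fintype.card_fin, FT_pow hk hT' h.1.le]
      using lt_of_le_of_ne (h.2 j) hj.symm

lemma exists_gt_of_forall_lt (hz : 0 < z) (h : ∀ i, s * z i ^ k < tapp T z i) :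
    ∃ t > s, IsSubEigenpair T t z := by
  have hev : ∀ᶠ t in nhdsWithin s (Set.Ioi s), ∀ i, t * z i ^ k < tapp T z i :=
    Filter.eventually_all.mpr fun i => nhdsWithin_le_nhds <|
      ContinuousAt.eventually_lt (by fun_prop) continuousAt_const (h i)
  obtain ⟨t, ht, hst⟩ := (hev.and self_mem_nhdsWithin).exists
  exact ⟨t, hst, hz, fun i => (ht i).le⟩

lemma exists_gt_of_ne (hk : k ≠ 0) (hT : ∀ i β, 0 < T i β) (hs : 0 ≤ s)
    (h : IsSubEigenpair T s z) {j : ι} (hj : tapp T z j ≠ s * z j ^ k) :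
    ∃ t > s, ∃ y, IsSubEigenpair T t y := by
  have hT' : TNonneg T := fun i β => (hT i β).le
  have hFT : 0 < FT T z := by
    refine lt_of_le_of_ne (FT_nonneg hT' h.1.le) fun h0 => ?_
    have hFTj : FT T z j ^ k = 0 := by rw [← h0, Pi.zero_apply, zero_pow hk]
    rw [FT_pow hk hT' h.1.le] at hFTj
    exact hj (le_antisymm (hFTj ▸ mul_nonneg hs (pow_nonneg (h.1.le j) k)) (h.2 j))
  obtain ⟨t, hst, ht⟩ := exists_gt_of_forall_lt hFT (h.mul_FT_pow_lt_tapp_FT hk hT hs hj)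
  exact ⟨t, hst, _, ht⟩

lemma exists_isNonnegEigenpair_of_pos (hk : k ≠ 0) (hT : ∀ i β, 0 < T i β) (hr : 0 ≤ r)
    (h : IsSubEigenpair T r x) : ∃ s ≥ r, ∃ z, IsNonnegEigenpair T s z := by
  have hT' : TNonneg T := fun i β => (hT i β).le
  let K : Set ((ι → ℝ) × ℝ) := (stdSimplex ℝ ι ×ˢ Set.Icc r (∑ i, ∑ β, T i β)) ∩
    {p | ∀ i, p.2 * p.1 i ^ k ≤ tapp T p.1 i}
  have hK : IsCompact K := by
    refine ((isCompact_stdSimplex ℝ ι).prod isCompact_Icc).inter_right ?_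
    simp only [Set.ofPred_forall]
    exact isClosed_iInter fun i =>
      isClosed_le (by fun_prop) ((continuous_tapp T i).comp continuous_fst)
  have hmem : ∀ {y t}, r ≤ t → IsSubEigenpair T t y → ((∑ i, y i)⁻¹ • y, t) ∈ K :=
    fun ht hy => ⟨⟨inv_sum_smul_mem_stdSimplex hy.1, ht, hy.le_sum hT'⟩, hy.normalize.2⟩
  obtain ⟨⟨z, s⟩, ⟨⟨hz, hrs, -⟩, hzs⟩, hmax⟩ :=
    hK.exists_isMaxOn ⟨_, hmem le_rfl h⟩ (f := Prod.snd) continuous_snd.continuousOn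
  refine ⟨s, hrs, z, hz, fun j => ?_⟩
  by_contra hj
  obtain ⟨t, hst, y, hy⟩ := exists_gt_of_ne hk hT (hr.trans hrs) ⟨pos_of_mem_stdSimplex hz, hzs⟩ hj
  exact hst.not_ge (hmax (hmem (hrs.trans hst.le) hy))

end IsSubEigenpair

lemma IsNonnegEigenpair.isSubEigenpair (h : IsNonnegEigenpair T s z) : IsSubEigenpair T s z :=
  ⟨pos_of_mem_stdSimplex h.1, fun i => (h.2 i).ge⟩

lemma IsNonnegEigenpair.tIsEig (h : IsNonnegEigenpair T s z) : TIsEig T s := by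
  refine ⟨fun i => z i, fun h0 => (pos_of_mem_stdSimplex h.1).ne' ?_, fun i => ?_⟩
  · exact funext fun i => Complex.ofReal_eq_zero.mp (congrFun h0 i)
  · have hi := h.2 i
    unfold tapp at hi
    beta_reduce
    exact_mod_cast hi

lemma isClosed_setOf_exists_isNonnegEigenpair_add (T : ι → (Fin k → ι) → ℝ) (a b : ℝ) :
    IsClosed {ε ∈ Set.Icc (0 : ℝ) 1 | ∃ s ∈ Set.Icc a b, ∃ z,
      IsNonnegEigenpair (fun i β => T i β + ε) s z} := by
  let K : Set (((ι → ℝ) × ℝ) × ℝ) := ((stdSimplex ℝ ι ×ˢ Set.Icc a b) ×ˢ Set.Icc 0 1) ∩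
    {p | ∀ i, tapp (fun i β => T i β + p.2) p.1.1 i = p.1.2 * p.1.1 i ^ k}
  have hK : IsCompact K := by
    refine (((isCompact_stdSimplex ℝ ι).prod isCompact_Icc).prod isCompact_Icc).inter_right ?_
    simp only [Set.ofPred_forall, tapp]
    exact isClosed_iInter fun i => isClosed_eq (by fun_prop) (by fun_prop)
  convert (hK.image continuous_snd).isClosed using 1
  ext ε
  constructor
  · rintro ⟨hε, s, hs, z, hz, hzs⟩
    exact ⟨((z, s), ε), ⟨⟨⟨hz, hs⟩, hε⟩, hzs⟩, rfl⟩
  · rintro ⟨⟨⟨z, s⟩, ε⟩, ⟨⟨⟨hz, hs⟩, hε⟩, hzs⟩, rfl⟩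
    exact ⟨hε, s, hs, z, hz, hzs⟩

theorem IsSubEigenpair.exists_isNonnegEigenpair (hk : k ≠ 0) (hT : TNonneg T) (hr : 0 ≤ r)
    (h : IsSubEigenpair T r x) : ∃ s ≥ r, ∃ z, IsNonnegEigenpair T s z := by
  have hclosed := isClosed_setOf_exists_isNonnegEigenpair_add T r (∑ i, ∑ β, (T i β + 1))
  have hpert : ∀ ε ∈ Set.Ioc (0 : ℝ) 1, ∃ s ∈ Set.Icc r (∑ i, ∑ β, (T i β + 1)), ∃ z,
      IsNonnegEigenpair (fun i β => T i β + ε) s z := by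
    intro ε hε
    have hTε : ∀ i β, 0 < T i β + ε := fun i β => add_pos_of_nonneg_of_pos (hT i β) hε.1
    have hsub : IsSubEigenpair (fun i β => T i β + ε) r x :=
      h.mono_tensor fun i β => le_add_of_nonneg_right hε.1.le
    obtain ⟨s, hrs, z, hz⟩ := hsub.exists_isNonnegEigenpair_of_pos hk hTε hr
    have hs : s ≤ ∑ i, ∑ β, (T i β + 1) :=
      (hz.isSubEigenpair.le_sum fun i β => (hTε i β).le).trans <|
        sum_le_sum fun i _ => sum_le_sum fun β _ => by gcongr; exact hε.2
    exact ⟨s, ⟨hrs, hs⟩, z, hz⟩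
  have hzero : (0 : ℝ) ∈ closure (Set.Ioc (0 : ℝ) 1) := by
    rw [closure_Ioc zero_ne_one]
    exact Set.left_mem_Icc.mpr zero_le_one
  obtain ⟨-, s, hs, z, hz⟩ := hclosed.closure_subset_iff.mpr
    (fun ε hε => ⟨Set.Ioc_subset_Icc_self hε, hpert ε hε⟩) hzero
  exact ⟨s, hs.1, z, by simpa only [add_zero] using hz⟩

end CollatzWielandt

section SpecRad

variable {ι : Type*} [Fintype ι] {k : ℕ} {T : ι → (Fin k → ι) → ℝ} {lam : ℂ}

lemma TIsEig.exists_isSubEigenpair (hT : TNonneg T) (h : TIsEig T lam) :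
    ∃ x, IsSubEigenpair T ‖lam‖ x := by
  obtain ⟨x, hx0, hx⟩ := h
  refine ⟨fun i => ‖x i‖, lt_of_le_of_ne (fun i => norm_nonneg (x i)) fun h0 => hx0 ?_, fun i => ?_⟩
  · exact funext fun i => norm_eq_zero.mp (congrFun h0 i).symm
  · calc ‖lam‖ * ‖x i‖ ^ k = ‖∑ β : Fin k → ι, (T i β : ℂ) * ∏ l, x (β l)‖ := by
          rw [hx, norm_mul, norm_pow]
      _ ≤ ∑ β : Fin k → ι, ‖(T i β : ℂ) * ∏ l, x (β l)‖ := norm_sum_le _ _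
      _ = tapp T (fun i => ‖x i‖) i := by
          simp only [tapp, norm_mul, norm_prod, Complex.norm_real, Real.norm_of_nonneg (hT _ _)]

lemma TIsEig.norm_le_specRad (hT : TNonneg T) (h : TIsEig T lam) : ‖lam‖ ≤ specRad T := by
  refine le_csSup ⟨∑ i, ∑ β, T i β, ?_⟩ ⟨lam, h, rfl⟩
  rintro _ ⟨μ, hμ, rfl⟩
  obtain ⟨x, hx⟩ := hμ.exists_isSubEigenpair hT
  exact hx.le_sum hT

lemma specRad_nonneg (T : ι → (Fin k → ι) → ℝ) : 0 ≤ specRad T :=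
  Real.sSup_nonneg (by rintro _ ⟨lam, -, rfl⟩; exact norm_nonneg lam)

lemma specRad_le {b : ℝ} (hb : 0 ≤ b) (h : ∀ lam, TIsEig T lam → ‖lam‖ ≤ b) : specRad T ≤ b :=
  Real.sSup_le (by rintro _ ⟨lam, hlam, rfl⟩; exact h lam hlam) hb

theorem IsSubEigenpair.le_specRad {r : ℝ} {x : ι → ℝ} (hk : k ≠ 0) (hT : TNonneg T) (hr : 0 ≤ r)
    (h : IsSubEigenpair T r x) : r ≤ specRad T := by
  obtain ⟨s, hrs, z, hz⟩ := h.exists_isNonnegEigenpair hk hT hr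
  calc r ≤ s := hrs
    _ ≤ ‖(s : ℂ)‖ := by rw [Complex.norm_real]; exact le_abs_self s
    _ ≤ specRad T := hz.tIsEig.norm_le_specRad hT

end SpecRad

/-- The tensor with entries `T_{e(i₁) … e(i_m)}`; for `e` the inclusion of `I`, this is the induced
tensor `T_I`. General maps `e` also cover the inclusion of `A` into a larger subset `S`. -/
def comapT {κ ι : Type*} {k : ℕ} (T : ι → (Fin k → ι) → ℝ) (e : κ → ι) :
    κ → (Fin k → κ) → ℝ :=
  fun i β => T (e i) (e ∘ β)

section Comap

variable {κ ι : Type*} {k : ℕ} {T : ι → (Fin k → ι) → ℝ} {e : κ → ι}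

lemma TNonneg.comapT (hT : TNonneg T) (e : κ → ι) : TNonneg (comapT T e) :=
  fun _ _ => hT _ _

lemma TNonneg.inducedT (hT : TNonneg T) (S : Finset ι) : TNonneg (inducedT T S) :=
  hT.comapT Subtype.val

variable [Fintype κ] [Fintype ι]

lemma sum_comp_tuple_of_injective {L M : Type*} [Fintype L] [DecidableEq L] [AddCommMonoid M]
    (he : Function.Injective e) (f : (L → ι) → M)
    (hf : ∀ β, (∃ l, β l ∉ Set.range e) → f β = 0) :
    ∑ γ : L → κ, f (e ∘ γ) = ∑ β, f β := by
  refine Fintype.sum_of_injective (e ∘ ·) he.comp_left _ _ (fun β hβ => hf β ?_) fun _ => rfl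
  contrapose! hβ
  choose γ hγ using hβ
  exact ⟨γ, funext hγ⟩

lemma tapp_extend (he : Function.Injective e) (x : κ → ℝ) (a : κ) :
    tapp T (Function.extend e x 0) (e a) = tapp (comapT T e) x a := by
  have h := sum_comp_tuple_of_injective he
    (fun β => T (e a) β * ∏ l : Fin k, Function.extend e x 0 (β l)) fun β ⟨l, hl⟩ => by
      rw [prod_eq_zero (mem_univ l) (Function.extend_apply' _ _ _ hl), mul_zero]
  simpa only [tapp, comapT, Function.comp_apply, he.extend_apply] using h.symm

lemma IsSubEigenpair.extend {r : ℝ} {x : κ → ℝ} (hk : k ≠ 0) (hT : TNonneg T)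
    (he : Function.Injective e) (h : IsSubEigenpair (comapT T e) r x) :
    IsSubEigenpair T r (Function.extend e x 0) := by
  have hnonneg : (0 : ι → ℝ) ≤ Function.extend e x 0 := fun i => by
    by_cases hi : ∃ a, e a = i
    · obtain ⟨a, rfl⟩ := hi
      exact (h.1.le a).trans_eq (he.extend_apply x 0 a).symm
    · exact (Function.extend_apply' x (0 : ι → ℝ) i hi).ge
  refine ⟨lt_of_le_of_ne hnonneg fun h0 => h.1.ne ?_, fun i => ?_⟩
  · exact funext fun a => (congrFun h0 (e a)).trans (he.extend_apply x 0 a)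
  · by_cases hi : ∃ a, e a = i
    · obtain ⟨a, rfl⟩ := hi
      rw [tapp_extend he, he.extend_apply]
      exact h.2 a
    · rw [Function.extend_apply' x (0 : ι → ℝ) i hi, Pi.zero_apply, zero_pow hk, mul_zero]
      exact tapp_nonneg hT hnonneg i

lemma specRad_comapT_le (hk : k ≠ 0) (hT : TNonneg T) (he : Function.Injective e) :
    specRad (comapT T e) ≤ specRad T := by
  refine specRad_le (specRad_nonneg T) fun lam hlam => ?_
  obtain ⟨x, hx⟩ := hlam.exists_isSubEigenpair (hT.comapT e)
  exact (hx.extend hk hT he).le_specRad hk hT (norm_nonneg lam)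

lemma specRad_inducedT_le (hk : k ≠ 0) (hT : TNonneg T) (S : Finset ι) :
    specRad (inducedT T S) ≤ specRad T :=
  specRad_comapT_le hk hT Subtype.val_injective

end Comap

/-- `A ⊆ S` is closed in `S` if no nonzero entry of `T_S` leads from an index in `A` to one outside
`A`, that is, `T_S` is block triangular with respect to `A` and `S \ A`. -/
def IsClosedIn {ι : Type*} {k : ℕ} (T : ι → (Fin k → ι) → ℝ) (A S : Finset ι) : Prop :=
  A ⊆ S ∧ ∀ i ∈ A, ∀ β : Fin k → ι, (∀ l, β l ∈ S) → T i β ≠ 0 → ∀ l, β l ∈ A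

section Blocks

variable {ι : Type*} {k : ℕ} {T : ι → (Fin k → ι) → ℝ} {A B S : Finset ι} {lam : ℂ}

lemma IsClosedIn.refl (T : ι → (Fin k → ι) → ℝ) (S : Finset ι) : IsClosedIn T S S :=
  ⟨Subset.rfl, fun _ _ _ hβ _ => hβ⟩

lemma IsClosedIn.trans (hBA : IsClosedIn T B A) (hAS : IsClosedIn T A S) : IsClosedIn T B S :=
  ⟨hBA.1.trans hAS.1, fun i hi β hβ hT => hBA.2 i hi β (hAS.2 i (hBA.1 hi) β hβ hT) hT⟩

lemma repMat_eq_zero_iff [Fintype ι] [DecidableEq ι] (hT : TNonneg T) {i j : ι} :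
    repMat T i j = 0 ↔ ∀ β : Fin k → ι, (∃ l, β l = j) → T i β = 0 := by
  rw [repMat, sum_eq_zero_iff_of_nonneg fun β _ => by split_ifs; exacts [hT i β, le_rfl]]
  simp only [mem_univ, true_imp_iff, ite_eq_right_iff]

lemma tIsEig_inducedT_of_subset (hAS : A ⊆ S) {x : {i // i ∈ S} → ℂ}
    (hxA : ∃ i : {i // i ∈ S}, i.val ∈ A ∧ x i ≠ 0)
    (hx : ∀ i, ∑ β : Fin k → {i // i ∈ S}, (inducedT T S i β : ℂ) * ∏ l, x (β l) = lam * x i ^ k)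
    (hleave : ∀ i : {i // i ∈ S}, i.val ∈ A → ∀ β : Fin k → {i // i ∈ S},
      (∃ l, (β l).val ∉ A) → (inducedT T S i β : ℂ) * ∏ l, x (β l) = 0) :
    TIsEig (inducedT T A) lam := by
  let e : {i // i ∈ A} → {i // i ∈ S} := fun i => ⟨i, hAS i.2⟩
  have he : Function.Injective e := fun _ _ h => Subtype.ext (congrArg Subtype.val h :)
  obtain ⟨i, hi, hxi⟩ := hxA
  refine ⟨x ∘ e, fun h0 => hxi (congrFun h0 ⟨i, hi⟩), fun a => ?_⟩
  refine (sum_comp_tuple_of_injective he _ fun β ⟨l, hl⟩ => ?_).trans (hx (e a))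
  exact hleave (e a) a.2 β ⟨l, fun hlA => hl ⟨⟨β l, hlA⟩, rfl⟩⟩

variable [DecidableEq ι]

lemma exists_isClosedIn_of_matReducible (hT : TNonneg T)
    (h : MatReducible (repMat (inducedT T S))) : ∃ A ⊂ S, A.Nonempty ∧ IsClosedIn T A S := by
  obtain ⟨I, hI, hIuniv, hzero⟩ := h
  have hmem : ∀ a : {i // i ∈ S}, a.val ∈ I.map (.subtype _) ↔ a ∈ I := fun a =>
    mem_map' (.subtype _)
  have hsub : I.map (.subtype _) ⊆ S := map_subtype_subset I
  obtain ⟨b, hb⟩ : ∃ b, b ∉ I := by simpa only [ne_eq, eq_univ_iff_forall, not_forall] using hIuniv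
  refine ⟨I.map (.subtype _), hsub.ssubset_of_ne fun hS => ?_, hI.map, hsub, ?_⟩
  · exact hb ((hmem b).mp (by rw [hS]; exact b.2))
  · intro i hi β hβ hTβ l
    by_contra hl
    exact hTβ <| (repMat_eq_zero_iff (hT.inducedT S)).mp
      (hzero ⟨i, hsub hi⟩ ((hmem _).mp hi) ⟨β l, hβ l⟩ fun hlI => hl ((hmem _).mpr hlI))
      (fun l => ⟨β l, hβ l⟩) ⟨l, rfl⟩

lemma exists_isClosedIn_matIrreducible (hT : TNonneg T) (hS : S.Nonempty) :
    ∃ A, A.Nonempty ∧ IsClosedIn T A S ∧ MatIrreducible (repMat (inducedT T A)) := by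
  obtain ⟨A, ⟨hA, hAS⟩, hmin⟩ := exists_minimal_of_wellFoundedLT
    (fun A : Finset ι => A.Nonempty ∧ IsClosedIn T A S) ⟨S, hS, .refl T S⟩
  refine ⟨A, hA, hAS, fun hred => ?_⟩
  obtain ⟨B, hBA, hB, hclosed⟩ := exists_isClosedIn_of_matReducible hT hred
  exact hBA.not_subset (hmin ⟨hB, hclosed.trans hAS⟩ hBA.subset)

lemma IsClosedIn.tIsEig_or_tIsEig_sdiff (hA : IsClosedIn T A S) (h : TIsEig (inducedT T S) lam) :
    TIsEig (inducedT T A) lam ∨ TIsEig (inducedT T (S \ A)) lam := by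
  obtain ⟨x, hx0, hx⟩ := h
  by_cases hxA : ∃ i : {i // i ∈ S}, i.val ∈ A ∧ x i ≠ 0
  · refine .inl (tIsEig_inducedT_of_subset hA.1 hxA hx fun i hi β ⟨l, hl⟩ => ?_)
    have hTβ : inducedT T S i β = 0 := by
      by_contra hTβ
      exact hl (hA.2 i hi _ (fun l => (β l).2) hTβ l)
    rw [hTβ, Complex.ofReal_zero, zero_mul]
  · push Not at hxA
    obtain ⟨i, hxi⟩ := Function.ne_iff.mp hx0
    have hi : i.val ∈ S \ A := mem_sdiff.mpr ⟨i.2, fun hiA => hxi (hxA i hiA)⟩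
    refine .inr (tIsEig_inducedT_of_subset sdiff_subset ⟨i, hi, hxi⟩ hx fun j _ β ⟨l, hl⟩ => ?_)
    have hlA : (β l).val ∈ A := by
      by_contra hlA
      exact hl (mem_sdiff.mpr ⟨(β l).2, hlA⟩)
    rw [prod_eq_zero (mem_univ l) (hxA _ hlA), mul_zero]

theorem exists_finpartition_matIrreducible_tIsEig (hT : TNonneg T) (S : Finset ι) :
    ∃ P : Finpartition S, (∀ A ∈ P.parts, MatIrreducible (repMat (inducedT T A))) ∧
      ∀ lam, TIsEig (inducedT T S) lam → ∃ A ∈ P.parts, TIsEig (inducedT T A) lam := by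
  induction S using Finset.strongInduction with
  | H S ih =>
    obtain rfl | hS := S.eq_empty_or_nonempty
    · exact ⟨Finpartition.empty _, by simp [Finpartition.empty],
        fun lam ⟨x, hx0, _⟩ => (hx0 (Subsingleton.elim x 0)).elim⟩
    · obtain ⟨A, hA, hAS, hirr⟩ := exists_isClosedIn_matIrreducible hT hS
      obtain ⟨P, hP, heig⟩ := ih (S \ A) (sdiff_ssubset hAS.1 hA)
      refine ⟨P.extend hA.ne_empty sdiff_disjoint (sdiff_union_of_subset hAS.1),
        forall_mem_insert _ _ _ |>.mpr ⟨hirr, hP⟩, fun lam hlam => ?_⟩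
      rcases hAS.tIsEig_or_tIsEig_sdiff hlam with h | h
      · exact ⟨A, mem_insert_self _ _, h⟩
      · obtain ⟨B, hB, hlamB⟩ := heig lam h
        exact ⟨B, mem_insert_of_mem hB, hlamB⟩

end Blocks

lemma exists_fin_family_of_finpartition {α : Type*} [DecidableEq α] {S : Finset α}
    (P : Finpartition S) (hS : S.Nonempty) :
    ∃ (k : ℕ) (_ : 0 < k) (Q : Fin k → Finset α), (∀ j, (Q j).Nonempty) ∧
      (∀ j j', j ≠ j' → Disjoint (Q j) (Q j')) ∧ univ.biUnion Q = S ∧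
      Set.range Q = P.parts := by
  let Q : Fin #P.parts → Finset α := fun j => P.parts.equivFin.symm j
  have hQ : ∀ j, Q j ∈ P.parts := fun j => (P.parts.equivFin.symm j).2
  have hinj : Function.Injective Q := Subtype.val_injective.comp P.parts.equivFin.symm.injective
  have hrange : Set.range Q = P.parts :=
    (P.parts.equivFin.symm.surjective.range_comp Subtype.val).trans Subtype.range_coe
  refine ⟨#P.parts, card_pos.mpr (P.parts_nonempty hS.ne_empty), Q,
    fun j => P.nonempty_of_mem_parts (hQ j),
    fun j j' hjj' => P.disjoint (hQ j) (hQ j') (hinj.ne hjj'), ?_, hrange⟩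
  have himage : univ.image Q = P.parts := coe_injective (by simpa using hrange)
  calc univ.biUnion Q = (univ.image Q).biUnion id :=
        (image_biUnion (f := Q) (s := univ) (t := id)).symm
    _ = S := by rw [himage, P.biUnion_parts]

theorem specRad_eq_max_over_weakly_irreducible_blocks_general {ι : Type*} [Fintype ι]
    [DecidableEq ι] [Nonempty ι] {k : ℕ} (hk : k ≠ 0) {T : ι → (Fin k → ι) → ℝ}
    (hT : TNonneg T) :
    ∃ P : Finpartition (univ : Finset ι),
      (∀ A ∈ P.parts, MatIrreducible (repMat (inducedT T A))) ∧
      IsGreatest ((fun A => specRad (inducedT T A)) '' P.parts) (specRad T) := by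
  obtain ⟨P, hirr, heig⟩ := exists_finpartition_matIrreducible_tIsEig hT univ
  obtain ⟨A, hA, hmax⟩ := exists_max_image P.parts (fun A => specRad (inducedT T A))
    (P.parts_nonempty univ_nonempty.ne_empty)
  have hle : specRad T ≤ specRad (inducedT T univ) :=
    specRad_comapT_le (T := inducedT T univ) (e := fun i => ⟨i, mem_univ i⟩) hk (hT.inducedT univ)
      fun _ _ h => congrArg Subtype.val h
  have hub : specRad (inducedT T univ) ≤ specRad (inducedT T A) :=
    specRad_le (specRad_nonneg _) fun lam hlam => by
      obtain ⟨B, hB, hlamB⟩ := heig lam hlam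
      exact (hlamB.norm_le_specRad (hT.inducedT B)).trans (hmax B hB)
  refine ⟨P, hirr, ⟨A, hA, le_antisymm (specRad_inducedT_le hk hT A) (hle.trans hub)⟩, ?_⟩
  rintro _ ⟨B, -, rfl⟩
  exact specRad_inducedT_le hk hT B

theorem specRad_eq_max_over_weakly_irreducible_blocks
    (m n : ℕ) (hm : 2 ≤ m) (hn : 2 ≤ n)
    (T : Fin n → (Fin (m - 1) → Fin n) → ℝ) (hT : TNonneg T) :
    ∃ (k : ℕ) (hk : 0 < k) (P : Fin k → Finset (Fin n)),
      (∀ j, (P j).Nonempty) ∧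
      (∀ j j', j ≠ j' → Disjoint (P j) (P j')) ∧
      (Finset.univ.biUnion P = (Finset.univ : Finset (Fin n))) ∧
      (∀ j, MatIrreducible (repMat (inducedT T (P j)))) ∧
      specRad T = (Finset.univ : Finset (Fin k)).sup' ⟨⟨0, hk⟩, Finset.mem_univ _⟩
        (fun j => specRad (inducedT T (P j))) := by
  have : NeZero n := ⟨by lia⟩
  obtain ⟨P, hirr, hmax⟩ := specRad_eq_max_over_weakly_irreducible_blocks_general (by lia) hT
  obtain ⟨k, hk, Q, hne, hdisj, hunion, hrange⟩ := exists_fin_family_of_finpartition P univ_nonempty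
  rw [← hrange, ← Set.range_comp] at hmax
  have : NeZero k := ⟨hk.ne'⟩
  exact ⟨k, hk, Q, hne, hdisj, hunion, fun j => hirr _ (mem_coe.mp (hrange ▸ Set.mem_range_self j)),
    hmax.csSup_eq.symm.trans (sup'_univ_eq_ciSup _).symm⟩
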